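/- Let (N, 𝔖) be a regular set system with |N| = n ≥ 1 and let v be a capacity on 𝔖. Then H(v) = log n if and only if v is the additive uniform capacity v*, i.e. v(A) = |A|/n for every A ∈ 𝔖. -/

import Mathlib

open Finset

variable {α : Type*} [DecidableEq α] [Fintype α]

/-- `c = (c 0, …, c m)` is a maximal chain of the set system `S`:
`∅ = c 0 ⊊ c 1 ⊊ ⋯ ⊊ c m = N`, each `c i ∈ S`, and no element of `S` lies strictly
between consecutive elements. Its length is `m`. -/
def IsMaxChainOf (S : Finset (Finset α)) (m : ℕ) (c : Fin (m + 1) → Finset α) : Prop :=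
  c 0 = ∅ ∧ c (Fin.last m) = Finset.univ ∧ (∀ i, c i ∈ S) ∧
    (∀ i : Fin m, c i.castSucc ⊂ c i.succ) ∧
    (∀ i : Fin m, ∀ x ∈ S, ¬(c i.castSucc ⊂ x ∧ x ⊂ c i.succ))

/-- `(N, S)` is a regular set system: `∅, N ∈ S` and every maximal chain has length `|N|`. -/
def IsRegularSetSystem (S : Finset (Finset α)) : Prop :=
  ∅ ∈ S ∧ Finset.univ ∈ S ∧
    ∀ (m : ℕ) (c : Fin (m + 1) → Finset α), IsMaxChainOf S m c → m = Fintype.card α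

/-- A capacity on the set system `S`: a `[0,1]`-valued, monotone set function
with `v ∅ = 0` and `v N = 1`. -/
def IsCapacity (S : Finset (Finset α)) (v : Finset α → ℝ) : Prop :=
  v ∅ = 0 ∧ v Finset.univ = 1 ∧ (∀ A ∈ S, 0 ≤ v A ∧ v A ≤ 1) ∧
    ∀ A ∈ S, ∀ B ∈ S, A ⊆ B → v A ≤ v B

/-- `h(x) = -x log₂ x` (with the convention `0 log 0 = 0`, satisfied by `Real.logb`). -/
noncomputable def hfun (x : ℝ) : ℝ := -(x * Real.logb 2 x)

/-- Shannon entropy of a probability distribution. -/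
noncomputable def shannonEntropy {m : ℕ} (p : Fin m → ℝ) : ℝ := ∑ i, hfun (p i)

/-- The increment distribution `p^{v,C}` along a chain `c`. -/
def chainDist (v : Finset α → ℝ) {m : ℕ} (c : Fin (m + 1) → Finset α) : Fin m → ℝ :=
  fun i => v (c i.succ) - v (c i.castSucc)

/-- The maximal chains of `S` (of length `|N|`; in a regular set system these are
all the maximal chains). -/
noncomputable def maxChains (S : Finset (Finset α)) :
    Finset (Fin (Fintype.card α + 1) → Finset α) :=
  @Finset.filter _ (fun c => IsMaxChainOf S (Fintype.card α) c) (Classical.decPred _)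
    Finset.univ

/-- The entropy `H(v)` of a capacity `v` on a regular set system. -/
noncomputable def capEntropy (S : Finset (Finset α)) (v : Finset α → ℝ) : ℝ :=
  (1 / ((maxChains S).card : ℝ)) * ∑ c ∈ maxChains S, shannonEntropy (chainDist v c)

/-!
The increments of `v` along a maximal chain form a probability distribution on `n` points, whose
entropy is at most `log₂ n` by Jensen's inequality for `-x log x`, with equality only for the
uniform distribution. So the average `H(v)` of these entropies is `log₂ n` iff all increments of `v`
along all maximal chains are `1 / n`. In a regular set system the `i`-th term of a maximal chain has
`i` elements, so this says `v A = |A| / n` for every `A` lying on a maximal chain; and every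
`A ∈ 𝔖` does, since the chain `{A}` extends to a maximal one.
-/

section Average

variable {ι K : Type*} [Field K] [LinearOrder K] [IsStrictOrderedRing K] {s : Finset ι}

theorem one_div_card_mul_sum_eq_iff_of_le {f : ι → K} {a : K} (hs : s.Nonempty)
    (hf : ∀ i ∈ s, f i ≤ a) : 1 / (#s : K) * ∑ i ∈ s, f i = a ↔ ∀ i ∈ s, f i = a := by
  have hcard : (#s : K) ≠ 0 := Nat.cast_ne_zero.2 hs.card_ne_zero
  rw [one_div, inv_mul_eq_iff_eq_mul₀ hcard, ← nsmul_eq_mul, ← sum_const,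
    sum_eq_sum_iff_of_le hf]

end Average

section Entropy

open Real

variable {ι : Type*} {s : Finset ι} {p : ι → ℝ}

theorem negMulLog_inv (x : ℝ) : negMulLog x⁻¹ = x⁻¹ * log x := by
  simp [negMulLog]

theorem sum_negMulLog_le_log_card (hp : ∀ i ∈ s, 0 ≤ p i) (hsum : ∑ i ∈ s, p i = 1) :
    ∑ i ∈ s, negMulLog (p i) ≤ log #s := by
  have hs : s.Nonempty := nonempty_of_sum_ne_zero (hsum.trans_ne one_ne_zero)
  have hcard : (#s : ℝ) ≠ 0 := Nat.cast_ne_zero.2 hs.card_ne_zero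
  have jensen := concaveOn_negMulLog.le_map_sum (t := s) (w := fun _ ↦ (#s : ℝ)⁻¹)
    (fun _ _ ↦ by positivity) (by simp [hcard]) hp
  simp only [smul_eq_mul, ← mul_sum, hsum, mul_one, negMulLog_inv] at jensen
  exact le_of_mul_le_mul_left jensen (by positivity)

theorem sum_negMulLog_eq_log_card_iff (hp : ∀ i ∈ s, 0 ≤ p i) (hsum : ∑ i ∈ s, p i = 1) :
    ∑ i ∈ s, negMulLog (p i) = log #s ↔ ∀ i ∈ s, p i = (#s : ℝ)⁻¹ := by
  have hs : s.Nonempty := nonempty_of_sum_ne_zero (hsum.trans_ne one_ne_zero)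
  have hcard : (#s : ℝ) ≠ 0 := Nat.cast_ne_zero.2 hs.card_ne_zero
  have jensen := strictConcaveOn_negMulLog.map_sum_eq_iff (t := s) (w := fun _ ↦ (#s : ℝ)⁻¹)
    (fun _ _ ↦ by positivity) (by simp [hcard]) hp
  simp only [smul_eq_mul, ← mul_sum, hsum, mul_one, negMulLog_inv] at jensen
  rw [← jensen, mul_right_inj' (inv_ne_zero hcard), eq_comm]

theorem shannonEntropy_eq_sum_negMulLog_div {m : ℕ} (q : Fin m → ℝ) :
    shannonEntropy q = (∑ i, negMulLog (q i)) / log 2 := by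
  simp only [shannonEntropy, hfun, negMulLog, logb, sum_div, neg_mul, neg_div, mul_div_assoc]

variable {m : ℕ} {q : Fin m → ℝ}

theorem shannonEntropy_le_logb (hq : ∀ i, 0 ≤ q i) (hsum : ∑ i, q i = 1) :
    shannonEntropy q ≤ logb 2 m := by
  rw [shannonEntropy_eq_sum_negMulLog_div, logb]
  gcongr
  simpa using sum_negMulLog_le_log_card (fun i _ ↦ hq i) hsum

theorem shannonEntropy_eq_logb_iff (hq : ∀ i, 0 ≤ q i) (hsum : ∑ i, q i = 1) :
    shannonEntropy q = logb 2 m ↔ ∀ i, q i = (m : ℝ)⁻¹ := by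
  rw [shannonEntropy_eq_sum_negMulLog_div, logb, div_left_inj' (log_pos one_lt_two).ne']
  simpa using sum_negMulLog_eq_log_card_iff (fun i _ ↦ hq i) hsum

end Entropy

section FinSequences

variable {G : Type*} {m : ℕ}

theorem sum_succ_sub_castSucc [AddCommGroup G] (f : Fin (m + 1) → G) :
    ∑ i : Fin m, (f i.succ - f i.castSucc) = f (Fin.last m) - f 0 := by
  rw [sum_sub_distrib, sub_eq_sub_iff_add_eq_add, add_comm, ← Fin.sum_univ_succ,
    Fin.sum_univ_castSucc, add_comm]

theorem forall_succ_sub_castSucc_eq_iff [AddGroup G] {f : Fin (m + 1) → G} (hf : f 0 = 0)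
    (d : G) :
    (∀ i : Fin m, f i.succ - f i.castSucc = d) ↔ ∀ i, f i = (i : ℕ) • d := by
  refine ⟨fun h i ↦ ?_, fun h i ↦ by simp [h, succ_nsmul']⟩
  induction i using Fin.induction with
  | zero => simpa using hf
  | succ i ih => rw [sub_eq_iff_eq_add.1 (h i), ih, Fin.val_castSucc, Fin.val_succ, succ_nsmul']

end FinSequences

section Chains

variable {β : Type*} [Fintype β] {S : Finset (Finset β)} {A : Finset β}

theorem card_apply_eq_of_strictMono {c : Fin (Fintype.card β + 1) → Finset β}
    (hc : StrictMono c) (i : Fin (Fintype.card β + 1)) : #(c i) = i := by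
  let cardFin (j : Fin (Fintype.card β + 1)) : Fin (Fintype.card β + 1) :=
    ⟨#(c j), Nat.lt_succ_of_le (card_le_univ _)⟩
  have hmono : StrictMono cardFin := fun _ _ hij ↦ card_lt_card (hc hij)
  -- A strictly increasing self-map of a finite linear order is the identity.
  exact congrArg Fin.val (hmono.apply_le.antisymm hmono.le_apply)

theorem exists_covBy_chain_bot_top_mem_range {P : Type*} [PartialOrder P] [BoundedOrder P]
    [Finite P] (a : P) :
    ∃ (m : ℕ) (c : Fin (m + 1) → P), c 0 = ⊥ ∧ c (Fin.last m) = ⊤ ∧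
      (∀ i : Fin m, c i.castSucc ⋖ c i.succ) ∧ a ∈ Set.range c := by
  classical
  obtain ⟨F, haF⟩ := Flag.exists_mem a
  have := Fintype.ofFinite F
  obtain ⟨m, hm⟩ := Nat.exists_eq_succ_of_ne_zero (Fintype.card_ne_zero (α := F))
  let e : Fin (m + 1) ≃o F := Fintype.orderIsoFinOfCardEq F hm
  refine ⟨m, fun i ↦ e i, congrArg Subtype.val e.map_bot, congrArg Subtype.val e.map_top,
    fun i ↦ ?_, e.symm ⟨a, haF⟩, by simp⟩
  rw [Flag.coe_covBy_coe, apply_covBy_apply_iff]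
  simp [Fin.covBy_iff]

theorem mem_maxChains {c : Fin (Fintype.card β + 1) → Finset β} :
    c ∈ maxChains S ↔ IsMaxChainOf S (Fintype.card β) c := by
  simp [maxChains]

theorem exists_isMaxChainOf_mem_range (hempty : ∅ ∈ S) (huniv : univ ∈ S) (hA : A ∈ S) :
    ∃ (m : ℕ) (c : Fin (m + 1) → Finset β), IsMaxChainOf S m c ∧ A ∈ Set.range c := by
  let _ : BoundedOrder S := Subtype.boundedOrder hempty huniv
  obtain ⟨m, c, hbot, htop, hcov, i, hi⟩ := exists_covBy_chain_bot_top_mem_range (⟨A, hA⟩ : S)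
  refine ⟨m, fun j ↦ c j, ⟨congrArg Subtype.val hbot, congrArg Subtype.val htop,
    fun j ↦ (c j).2, fun j ↦ (hcov j).lt, fun j x hx hbetween ↦ ?_⟩, i, congrArg Subtype.val hi⟩
  exact (hcov j).2 (c := ⟨x, hx⟩) hbetween.1 hbetween.2

theorem IsRegularSetSystem.exists_mem_maxChains_mem_range (hS : IsRegularSetSystem S)
    (hA : A ∈ S) : ∃ c ∈ maxChains S, A ∈ Set.range c := by
  obtain ⟨hempty, huniv, hlength⟩ := hS
  obtain ⟨m, c, hc, hAc⟩ := exists_isMaxChainOf_mem_range hempty huniv hA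
  obtain rfl := hlength m c hc
  exact ⟨c, mem_maxChains.2 hc, hAc⟩

theorem IsRegularSetSystem.nonempty_maxChains (hS : IsRegularSetSystem S) :
    (maxChains S).Nonempty :=
  let ⟨c, hc, _⟩ := hS.exists_mem_maxChains_mem_range hS.1
  ⟨c, hc⟩

theorem IsMaxChainOf.strictMono {m : ℕ} {c : Fin (m + 1) → Finset β} (hc : IsMaxChainOf S m c) :
    StrictMono c :=
  Fin.strictMono_iff_lt_succ.2 hc.2.2.2.1

end Chains

namespace IsCapacity

variable {β : Type*} [Fintype β] {S : Finset (Finset β)} {v : Finset β → ℝ} {m : ℕ}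
  {c : Fin (m + 1) → Finset β}

theorem chainDist_nonneg (hv : IsCapacity S v) (hc : IsMaxChainOf S m c) (i : Fin m) :
    0 ≤ chainDist v c i := by
  obtain ⟨-, -, hcS, hlt, -⟩ := hc
  exact sub_nonneg.2 (hv.2.2.2 _ (hcS _) _ (hcS _) (hlt i).subset)

theorem sum_chainDist (hv : IsCapacity S v) (hc : IsMaxChainOf S m c) :
    ∑ i, chainDist v c i = 1 := by
  obtain ⟨hbot, htop, -⟩ := hc
  simp only [chainDist, sum_succ_sub_castSucc (fun i ↦ v (c i)), hbot, htop, hv.1, hv.2.1, sub_zero]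

theorem shannonEntropy_chainDist_le_logb (hv : IsCapacity S v) (hc : IsMaxChainOf S m c) :
    shannonEntropy (chainDist v c) ≤ Real.logb 2 m :=
  shannonEntropy_le_logb (hv.chainDist_nonneg hc) (hv.sum_chainDist hc)

theorem shannonEntropy_chainDist_eq_logb_iff (hv : IsCapacity S v) (hc : IsMaxChainOf S m c) :
    shannonEntropy (chainDist v c) = Real.logb 2 m ↔ ∀ i, v (c i) = (i : ℕ) / (m : ℝ) := by
  have hzero : v (c 0) = 0 := by rw [hc.1, hv.1]
  rw [shannonEntropy_eq_logb_iff (hv.chainDist_nonneg hc) (hv.sum_chainDist hc)]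
  simpa only [chainDist, nsmul_eq_mul, div_eq_mul_inv] using
    forall_succ_sub_castSucc_eq_iff (f := fun i ↦ v (c i)) hzero (m : ℝ)⁻¹

theorem capEntropy_eq_logb_iff_forall_maxChains (hv : IsCapacity S v)
    (hchains : (maxChains S).Nonempty) :
    capEntropy S v = Real.logb 2 (Fintype.card β) ↔
      ∀ c ∈ maxChains S, ∀ i, v (c i) = (#(c i) : ℝ) / Fintype.card β := by
  rw [capEntropy, one_div_card_mul_sum_eq_iff_of_le hchains fun c hc ↦
    hv.shannonEntropy_chainDist_le_logb (mem_maxChains.1 hc)]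
  refine forall₂_congr fun c hc ↦ ?_
  have hc := mem_maxChains.1 hc
  simp only [hv.shannonEntropy_chainDist_eq_logb_iff hc, card_apply_eq_of_strictMono hc.strictMono]

end IsCapacity

/-- the entropy of a capacity on a regular set system attains its
maximum `log₂ n` iff the capacity is the additive uniform capacity `v*(A) = |A| / n`. -/
theorem capEntropy_eq_log_iff (S : Finset (Finset α)) (hS : IsRegularSetSystem S)
    (hn : 1 ≤ Fintype.card α) (v : Finset α → ℝ) (hv : IsCapacity S v) :
    capEntropy S v = Real.logb 2 (Fintype.card α) ↔
      ∀ A ∈ S, v A = (A.card : ℝ) / (Fintype.card α : ℝ) := by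
  rw [hv.capEntropy_eq_logb_iff_forall_maxChains hS.nonempty_maxChains]
  constructor
  · intro h A hA
    obtain ⟨c, hc, i, rfl⟩ := hS.exists_mem_maxChains_mem_range hA
    exact h c hc i
  · intro h c hc i
    obtain ⟨-, -, hcS, -⟩ := mem_maxChains.1 hc
    exact h (c i) (hcS i)
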